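/- As formal power series in q, t(q)^7 = ∑_{l=0}^{6} a_l(t(q^7))·t(q)^l, where t(q^7) denotes the series obtained from t by the substitution q ↦ q^7. -/

import Mathlib

noncomputable section

/-- `J b = ∏_{k=1}^∞ (1 - q^{b·k})` as a formal power series with integer coefficients. -/
def J (b : ℕ) : PowerSeries ℤ :=
  PowerSeries.mk fun n =>
    PowerSeries.coeff n
      (∏ k ∈ Finset.range (n + 1), (1 - (PowerSeries.X : PowerSeries ℤ) ^ (b * (k + 1))))

/-- The polynomials `a_0, …, a_6` of Theorem 2.6 (evaluated at `x`). -/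
def aPoly {R : Type*} [CommRing R] (l : ℕ) (x : R) : R :=
  match l with
  | 0 => x
  | 1 => 7 ^ 2 * x ^ 2 + 4 * 7 * x
  | 2 => 7 ^ 4 * x ^ 3 + 4 * 7 ^ 3 * x ^ 2 + 46 * 7 * x
  | 3 => 7 ^ 6 * x ^ 4 + 4 * 7 ^ 5 * x ^ 3 + 46 * 7 ^ 3 * x ^ 2 + 272 * 7 * x
  | 4 => 7 ^ 8 * x ^ 5 + 4 * 7 ^ 7 * x ^ 4 + 46 * 7 ^ 5 * x ^ 3 + 272 * 7 ^ 3 * x ^ 2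
      + 845 * 7 * x
  | 5 => 7 ^ 10 * x ^ 6 + 4 * 7 ^ 9 * x ^ 5 + 46 * 7 ^ 7 * x ^ 4 + 272 * 7 ^ 5 * x ^ 3
      + 845 * 7 ^ 3 * x ^ 2 + 176 * 7 ^ 2 * x
  | 6 => 7 ^ 12 * x ^ 7 + 4 * 7 ^ 11 * x ^ 6 + 46 * 7 ^ 9 * x ^ 5 + 272 * 7 ^ 7 * x ^ 4
      + 845 * 7 ^ 5 * x ^ 3 + 176 * 7 ^ 4 * x ^ 2 + 82 * 7 ^ 2 * x
  | _ => 0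

/-- Substitution `q ↦ q^7` on formal power series, defined coefficientwise. -/
def expand7 (f : PowerSeries ℤ) : PowerSeries ℤ :=
  PowerSeries.mk fun m => if 7 ∣ m then PowerSeries.coeff (m / 7) f else 0

open PowerSeries

/-- finite product -/
def PP (R : Type*) [CommRing R] (b n : ℕ) : PowerSeries R :=
  ∏ k ∈ Finset.range n, (1 - (PowerSeries.X : PowerSeries R) ^ (b * (k + 1)))

lemma PP_succ (R : Type*) [CommRing R] (b n : ℕ) :
    PP R b (n+1) = PP R b n * (1 - (PowerSeries.X : PowerSeries R) ^ (b * (n + 1))) := by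
  simp [PP, Finset.prod_range_succ]

lemma PP_zero (R : Type*) [CommRing R] (b : ℕ) : PP R b 0 = 1 := by simp [PP]

lemma PP_dvd (R : Type*) [CommRing R] (b : ℕ) (hb : 1 ≤ b) (M n : ℕ) (h : M ≤ n) :
    (X : PowerSeries R) ^ (M+1) ∣ PP R b n - PP R b M := by
  induction n, h using Nat.le_induction with
  | base => simp
  | succ n hn ih =>
    rw [PP_succ]
    have : (X : PowerSeries R) ^ (M+1) ∣ X ^ (b * (n+1)) := pow_dvd_pow _ (by nlinarith)
    have h2 : PP R b n * (1 - X ^ (b * (n + 1))) - PP R b M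
      = (PP R b n - PP R b M) - PP R b n * X ^ (b * (n + 1)) := by ring
    rw [h2]
    exact dvd_sub ih (Dvd.dvd.mul_left this _)

lemma J_coeff (b : ℕ) (hb : 1 ≤ b) (n m : ℕ) (h : n ≤ m) :
    coeff n (J b) = coeff n (PP ℤ b m) := by
  have h1 : coeff n (J b) = coeff n (PP ℤ b (n+1)) := by simp [J, PP]
  have h2 := PP_dvd ℤ b hb n m h
  have h3 := PP_dvd ℤ b hb n (n+1) (by omega)
  rw [X_pow_dvd_iff] at h2 h3
  have h2 := h2 n (by omega)
  have h3 := h3 n (by omega)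
  rw [map_sub] at h2 h3
  rw [h1]; linarith

lemma J_dvd (b : ℕ) (hb : 1 ≤ b) (M n : ℕ) (h : M ≤ n) :
    (X : PowerSeries ℤ) ^ (M+1) ∣ J b - PP ℤ b n := by
  rw [X_pow_dvd_iff]
  intro m hm
  rw [map_sub, J_coeff b hb m n (by omega), sub_self]

lemma eq_of_dvd {R : Type*} [CommRing R] (f g : PowerSeries R)
    (h : ∀ M : ℕ, X ^ (M+1) ∣ f - g) : f = g := by
  ext n
  have := h n
  rw [X_pow_dvd_iff] at this
  have := this n (by omega)
  rw [map_sub] at this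
  exact sub_eq_zero.mp this

lemma expand7_eq (f : PowerSeries ℤ) : expand7 f = PowerSeries.expand 7 (by norm_num) f := by
  ext n
  simp only [expand7, coeff_mk]
  split_ifs with h
  · obtain ⟨m, rfl⟩ := h
    rw [coeff_expand_mul]; simp
  · rw [coeff_expand_of_not_dvd _ _ _ h]

lemma expand_PP (b n : ℕ) :
    PowerSeries.expand 7 (by norm_num) (PP ℤ b n) = PP ℤ (7*b) n := by
  simp [PP, map_prod, ← pow_mul, mul_assoc]

lemma expand_J (b : ℕ) (hb : 1 ≤ b) :
    PowerSeries.expand 7 (by norm_num) (J b) = J (7*b) := by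
  apply eq_of_dvd
  intro M
  have h1 := J_dvd (7*b) (by omega) M M le_rfl
  obtain ⟨g, hg⟩ := J_dvd b hb M M le_rfl
  have h2 := congrArg (PowerSeries.expand (R := ℤ) 7 (by norm_num)) hg
  rw [map_sub, expand_PP, map_mul, map_pow, expand_X, ← pow_mul] at h2
  have h3 : (X : PowerSeries ℤ)^(M+1) ∣ X ^ (7 * (M+1)) := pow_dvd_pow _ (by omega)
  have := dvd_sub (h3.mul_right (PowerSeries.expand 7 (by norm_num) g)) h1
  rw [← h2] at this
  simpa using this

lemma J_ne (b : ℕ) (hb : 1 ≤ b) : J b ≠ 0 := by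
  intro h
  have : coeff 0 (J b) = 0 := by rw [h]; simp
  rw [J_coeff b hb 0 0 le_rfl] at this
  simp [PP] at this

lemma J_pent : J 1 = pentagonalSeries ℤ := by
  ext n
  obtain ⟨s, hs⟩ := Filter.eventually_atTop.mp (coeff_prod_one_sub_X_pow_eventually_eq ℤ n)
  obtain ⟨m, hm⟩ := Finset.exists_nat_subset_range s
  rw [← hs (Finset.range (max m n)) (hm.trans (Finset.range_mono (le_max_left _ _))),
   J_coeff 1 le_rfl n (max m n) (le_max_right _ _)]
  simp [PP]

abbrev qq (n : ℕ) : PowerSeries ℤ := PP ℤ 1 n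

lemma qq_succ (n : ℕ) : qq (n+1) = qq n * (1 - X ^ (n+1)) := by
  rw [qq, PP_succ, one_mul]

lemma qq_unit (n : ℕ) : IsUnit (qq n) := by
  rw [PowerSeries.isUnit_iff_constantCoeff]
  simp [qq, PP, map_prod]

/-- q-binomial product -/
def Pz (y : PowerSeries ℤ) (N : ℕ) : Polynomial (PowerSeries ℤ) :=
  ∏ k ∈ Finset.range N, (Polynomial.C y - Polynomial.C (X ^ k) * Polynomial.X)

lemma Pz_succ (y : PowerSeries ℤ) (N : ℕ) :
    Pz y (N+1) = Polynomial.C y * Pz y N - Polynomial.C (X ^ N) * (Pz y N * Polynomial.X) := by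
  rw [Pz, Finset.prod_range_succ, ← Pz]; ring

lemma Pz_coeff_gt (y : PowerSeries ℤ) (N j : ℕ) (h : N < j) : (Pz y N).coeff j = 0 := by
  induction N generalizing j with
  | zero => simp [Pz, Polynomial.coeff_one]; omega
  | succ N ih =>
    obtain ⟨j, rfl⟩ : ∃ i, j = i + 1 := ⟨j-1, by omega⟩
    rw [Pz_succ, Polynomial.coeff_sub, Polynomial.coeff_C_mul, Polynomial.coeff_C_mul,
      Polynomial.coeff_mul_X, ih _ (by omega), ih _ (by omega)]
    simp

lemma Pz_coeff (y : PowerSeries ℤ) (N : ℕ) : ∀ j m : ℕ, N = j + m →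
    (Pz y N).coeff j * (qq j * qq m) = (-1)^j * X ^ (j.choose 2) * y ^ m * qq N := by
  induction N with
  | zero =>
    intro j m h
    obtain rfl : j = 0 := by omega
    obtain rfl : m = 0 := by omega
    simp [Pz, qq, PP]
  | succ N ih =>
    intro j m h
    rw [Pz_succ]
    rcases j with _ | j
    · obtain rfl : m = N + 1 := by omega
      have := ih 0 N (by omega)
      simp only [Polynomial.coeff_sub, Polynomial.coeff_C_zero, Polynomial.mul_coeff_zero,
        Polynomial.coeff_X_zero, mul_zero, sub_zero, qq_succ] at this ⊢
      linear_combination (y * (1 - X^(N+1))) * this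
    · rw [Polynomial.coeff_sub, Polynomial.coeff_C_mul, Polynomial.coeff_C_mul,
      Polynomial.coeff_mul_X]
      have hc : (j+1).choose 2 = j + j.choose 2 := by
        rw [Nat.choose_succ_succ' j 1]; simp
      rcases m with _ | m
      · obtain rfl : N = j := by omega
        have := ih N 0 (by omega)
        rw [Pz_coeff_gt _ _ _ (by omega), qq_succ, hc]
        linear_combination (- X ^ N * (1 - X ^ (N+1))) * this
      · obtain rfl : N = j + m + 1 := by omega
        have h1 := ih (j+1) m (by omega)
        have h2 := ih j (m+1) (by omega)
        rw [qq_succ (j+m+1)]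
        rw [qq_succ j, hc] at h1
        rw [qq_succ m] at h2
        rw [qq_succ j, qq_succ m, hc]
        linear_combination (y * (1 - X^(m+1))) * h1 - (X ^ (j+m+1)*(1 - X^(j+1))) * h2

lemma prod1 (n : ℕ) : ∏ k ∈ Finset.range n, ((X : PowerSeries ℤ)^n - X^k)
    = (-1)^n * X ^ (n.choose 2) * qq n := by
  have h1 : ∀ k ∈ Finset.range n, ((X : PowerSeries ℤ)^n - X^k) = (-1) * X^k * (1 - X^(n-k)) := by
    intro k hk
    have : n = k + (n - k) := by have := Finset.mem_range.mp hk; omega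
    conv_lhs => rw [this, pow_add]
    ring
  rw [Finset.prod_congr rfl h1, Finset.prod_mul_distrib, Finset.prod_mul_distrib,
    Finset.prod_const, Finset.card_range, Finset.prod_pow_eq_pow_sum, Finset.sum_range_id,
    Nat.choose_two_right]
  congr 1
  rw [qq, PP, ← Finset.prod_range_reflect]
  apply Finset.prod_congr rfl
  intro k hk
  have := Finset.mem_range.mp hk
  congr 2
  omega

lemma prod2 (n : ℕ) : ∏ k ∈ Finset.range n, ((X : PowerSeries ℤ)^n - X^(n+1+k))
    = X ^ (n * n) * qq n := by
  have h1 : ∀ k ∈ Finset.range n, ((X : PowerSeries ℤ)^n - X^(n+1+k)) = X^n * (1 - X^(1 * (k+1))) := by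
    intro k hk
    ring
  rw [Finset.prod_congr rfl h1, Finset.prod_mul_distrib, Finset.prod_const, Finset.card_range, pow_mul]
  rfl

lemma deriv1 (n : ℕ) : (Polynomial.derivative (Pz (X^n) (2*n+1))).eval 1
    = - X^n * ((-1)^n * X ^ (n.choose 2) * qq n) * (X ^ (n * n) * qq n) := by
  have : Pz (X^n) (2*n+1) = (∏ k ∈ Finset.range n, (Polynomial.C (X^n) - Polynomial.C (X ^ k) * Polynomial.X))
     * (Polynomial.C (X^n) - Polynomial.C (X ^ n) * Polynomial.X)
     * (∏ k ∈ Finset.range n, (Polynomial.C (X^n) - Polynomial.C (X ^ (n+1+k)) * Polynomial.X)) := by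
    rw [Pz, show 2*n+1 = (n+1)+n by ring, Finset.prod_range_add, Finset.prod_range_succ]
  rw [this]
  rw [← prod1, ← prod2]
  simp only [Polynomial.derivative_mul, Polynomial.eval_add, Polynomial.eval_mul, Polynomial.eval_sub,
    Polynomial.eval_C, Polynomial.eval_X, Polynomial.derivative_sub, Polynomial.derivative_C,
    Polynomial.derivative_X, Polynomial.eval_prod, Polynomial.eval_zero, Polynomial.eval_one]
  ring

lemma deriv2 (n : ℕ) : (Polynomial.derivative (Pz (X^n) (2*n+1))).eval 1
    = ∑ m ∈ Finset.range (n+1), (Pz (X^n) (2*n+1)).coeff (n+1+m) * (2*(m : PowerSeries ℤ)+1) := by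
  have hdeg : (Pz (X^n) (2*n+1)).natDegree < 2*n+2 := by
    rw [Nat.lt_succ_iff, Polynomial.natDegree_le_iff_coeff_eq_zero]
    intro N hN
    exact Pz_coeff_gt _ _ _ hN
  rw [Polynomial.derivative_eval, Polynomial.sum_over_range' _ (by simp) _ hdeg,
    show 2*n+2 = (n+1)+(n+1) by ring, Finset.sum_range_add, ← Finset.sum_range_reflect,
    ← Finset.sum_add_distrib]
  apply Finset.sum_congr rfl
  intro m hm
  have hm' := Finset.mem_range.mp hm
  obtain ⟨d, rfl⟩ : ∃ d, n = m + d := ⟨n - m, by omega⟩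
  have e1 : m + d + 1 - 1 - m = d := by omega
  rw [e1]
  have h1 := Pz_coeff (X^(m+d)) (2*(m+d)+1) (m+d+1+m) d (by omega)
  have h2 := Pz_coeff (X^(m+d)) (2*(m+d)+1) d (m+d+1+m) (by omega)
  have h3 : (Pz (X^(m+d)) (2*(m+d)+1)).coeff d = - (Pz (X^(m+d)) (2*(m+d)+1)).coeff (m+d+1+m) := by
    have hu := (qq_unit d).mul (qq_unit (m+d+1+m))
    apply hu.mul_right_cancel
    rw [h2, neg_mul, mul_comm (qq d), h1, ← pow_mul, ← pow_mul]
    have e2 : (X : PowerSeries ℤ) ^ ((m+d+1+m).choose 2) * X^((m+d) * d)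
      = X ^ (d.choose 2) * X^((m+d) * (m+d+1+m)) := by
      rw [← pow_add, ← pow_add]
      congr 1
      have c1 : ∀ k : ℕ, 2 * (k.choose 2 : ℤ) = k * (k - 1) := by
        intro k
        induction k with
        | zero => simp
        | succ k ih => rw [Nat.choose_succ_succ' k 1]; push_cast; simp; linarith
      have c2 := c1 d
      have c3 := c1 (m+d+1+m)
      zify
      push_cast at c3
      nlinarith
    have e3 : (-1 : PowerSeries ℤ)^(m+d+1+m) = - (-1)^d := by
      rw [show m+d+1+m = 2*m + d + 1 by ring, pow_succ, pow_add, pow_mul]; simp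
    rw [e3]
    linear_combination (-(-1)^d * qq (2*(m+d)+1)) * e2
  simp only [one_pow, mul_one]
  rw [h3]
  push_cast
  ring

lemma two_choose (k : ℕ) : 2 * (k.choose 2 : ℤ) = k * (k - 1) := by
  induction k with
  | zero => simp
  | succ k ih => rw [Nat.choose_succ_succ' k 1]; push_cast; simp; linarith

lemma jac_fin (n : ℕ) : ∃ h : ℕ → PowerSeries ℤ,
    (∀ m ≤ n, h m * (qq (n+1+m) * qq (n-m)) = qq (2*n+1)) ∧
    ∑ m ∈ Finset.range (n+1), (-1)^m * (2*(m : PowerSeries ℤ)+1) * X ^ ((m+1).choose 2) * h m = qq n ^ 2 := by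
  have hex : ∀ m : ℕ, ∃ g : PowerSeries ℤ, g * (qq (n+1+m) * qq (n-m)) = qq (2*n+1) := by
    intro m
    obtain ⟨u, hu⟩ := (qq_unit (n+1+m)).mul (qq_unit (n-m))
    exact ⟨qq (2*n+1) * (u⁻¹ : (PowerSeries ℤ)ˣ), by rw [← hu]; simp⟩
  choose h hh using hex
  refine ⟨h, fun m _ => hh m, ?_⟩
  have h12 := (deriv1 n).symm.trans (deriv2 n)
  have hterm : ∀ m ∈ Finset.range (n+1), (Pz (X^n) (2*n+1)).coeff (n+1+m) * (2*(m : PowerSeries ℤ)+1)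
      = ((-1)^(n+1) * X ^ (n + n.choose 2 + n*n)) *
        ((-1)^m * (2*(m : PowerSeries ℤ)+1) * X ^ ((m+1).choose 2) * h m) := by
    intro m hm
    have hm' := Finset.mem_range.mp hm
    obtain ⟨d, rfl⟩ : ∃ d, n = m + d := ⟨n - m, by omega⟩
    have h1 := Pz_coeff (X^(m+d)) (2*(m+d)+1) (m+d+1+m) d (by omega)
    have hm2 := hh m
    rw [show m + d - m = d by omega] at hm2
    have key : (Pz (X^(m+d)) (2*(m+d)+1)).coeff (m+d+1+m)
      = (-1)^(m+d+1+m) * X ^ ((m+d+1+m).choose 2) * (X^(m+d)) ^ d * h m := by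
      apply ((qq_unit (m+d+1+m)).mul (qq_unit d)).mul_right_cancel
      rw [h1, ← hm2]; ring
    have e2 : (X : PowerSeries ℤ) ^ ((m+d+1+m).choose 2) * (X^(m+d)) ^ d
        = X ^ ((m+d) + (m+d).choose 2 + (m+d)*(m+d)) * X ^ ((m+1).choose 2) := by
      rw [← pow_mul, ← pow_add, ← pow_add]
      congr 1
      have c2 := two_choose (m+d)
      have c3 := two_choose (m+d+1+m)
      have c4 := two_choose (m+1)
      zify
      push_cast at c2 c3 c4
      nlinarith
    rw [key, pow_add (-1 : PowerSeries ℤ) (m+d+1) m]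
    linear_combination ((-1)^(m+d+1) * (-1)^m * h m * (2*m+1)) * e2
  rw [Finset.sum_congr rfl hterm, ← Finset.mul_sum] at h12
  have hne : ((-1)^(n+1) * X ^ (n + n.choose 2 + n*n) : PowerSeries ℤ) ≠ 0 := by
    apply mul_ne_zero
    · exact pow_ne_zero _ (by norm_num)
    · exact pow_ne_zero _ X_ne_zero
  apply mul_left_cancel₀ hne
  rw [← h12]
  ring

lemma J1_unit : IsUnit (J 1) := by
  rw [PowerSeries.isUnit_iff_constantCoeff]
  have := J_coeff 1 le_rfl 0 0 le_rfl
  rw [← coeff_zero_eq_constantCoeff_apply, this]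
  simp [PP]

lemma jac_dvd (M : ℕ) : (X : PowerSeries ℤ)^(M+1) ∣
    J 1 ^ 3 - ∑ m ∈ Finset.range (2*M+1), (-1)^m * (2*(m : PowerSeries ℤ)+1) * X ^ ((m+1).choose 2) := by
  obtain ⟨h, h1, h2⟩ := jac_fin (2*M)
  let I : Ideal (PowerSeries ℤ) := Ideal.span {X^(M+1)}
  let π := Ideal.Quotient.mk I
  have hπ : ∀ f g : PowerSeries ℤ, (X : PowerSeries ℤ)^(M+1) ∣ f - g ↔ π f = π g := by
    intro f g
    rw [Ideal.Quotient.eq, Ideal.mem_span_singleton]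
  have hJ : ∀ n, M ≤ n → π (J 1) = π (qq n) := fun n hn => (hπ _ _).mp (J_dvd 1 le_rfl M n hn)
  rw [hπ]
  have hu : IsUnit (π (J 1)) := J1_unit.map π
  rw [pow_succ', map_mul, map_pow, hJ (2*M) (by omega), ← map_pow, ← h2, ← hJ (2*M) (by omega),
    ← map_mul, Finset.mul_sum, map_sum, map_sum]
  apply Finset.sum_congr rfl
  intro m hm
  have hm' := Finset.mem_range.mp hm
  by_cases hmM : m ≤ M
  · have h3 := congrArg π (h1 m (by omega))
    rw [map_mul, map_mul, ← hJ _ (by omega), ← hJ _ (by omega), ← hJ _ (by omega)] at h3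
    have h4 : π (J 1) * π (h m) = 1 := by
      apply hu.mul_left_cancel
      linear_combination h3
    simp only [map_mul] at h4 ⊢
    linear_combination (π ((-1)^m) * π (2*m+1) * π (X ^ ((m+1).choose 2))) * h4
  · have h5 : π (X ^ ((m+1).choose 2)) = 0 := by
      rw [← map_zero π, ← hπ, sub_zero]
      apply pow_dvd_pow
      rw [Nat.choose_succ_succ' m 1]; simp; omega
    simp only [map_mul, h5]; simp

lemma jac_coeff_tri (m : ℕ) : coeff ((m+1).choose 2) (J 1 ^ 3) = (-1)^m * (2*(m:ℤ)+1) := by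
  have := jac_dvd ((m+1).choose 2)
  rw [X_pow_dvd_iff] at this
  have := this ((m+1).choose 2) (by omega)
  rw [map_sub, sub_eq_zero] at this
  rw [this, map_sum, Finset.sum_eq_single m]
  · have : ((-1)^m * (2*(m : PowerSeries ℤ)+1) * X ^ ((m+1).choose 2) : PowerSeries ℤ)
      = C ((-1)^m * (2*(m:ℤ)+1) : ℤ) * X ^ ((m+1).choose 2) := by simp
    rw [this, coeff_C_mul, coeff_X_pow_self, mul_one]
  · intro b hb hbm
    have : ((-1)^b * (2*(b : PowerSeries ℤ)+1) * X ^ ((b+1).choose 2) : PowerSeries ℤ)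
      = C ((-1)^b * (2*(b:ℤ)+1) : ℤ) * X ^ ((b+1).choose 2) := by simp
    rw [this, coeff_C_mul, coeff_X_pow, if_neg, mul_zero]
    intro he
    apply hbm
    have c1 := two_choose (m+1)
    have c2 := two_choose (b+1)
    rw [he] at c1
    rw [c1] at c2
    push_cast at c2
    zify
    have : ((m:ℤ) - b) * (m + b + 1) = 0 := by linarith
    rcases mul_eq_zero.mp this with h | h <;> omega
  · intro hm
    exfalso; apply hm
    rw [Finset.mem_range, Nat.choose_succ_succ' m 1]
    simp
    omega

lemma jac_coeff_not (N : ℕ) (h : ∀ m : ℕ, N ≠ (m+1).choose 2) : coeff N (J 1 ^ 3) = 0 := by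
  have := jac_dvd N
  rw [X_pow_dvd_iff] at this
  have := this N (by omega)
  rw [map_sub, sub_eq_zero] at this
  rw [this, map_sum]
  apply Finset.sum_eq_zero
  intro b hb
  have : ((-1)^b * (2*(b : PowerSeries ℤ)+1) * X ^ ((b+1).choose 2) : PowerSeries ℤ)
      = C ((-1)^b * (2*(b:ℤ)+1) : ℤ) * X ^ ((b+1).choose 2) := by simp
  rw [this, coeff_C_mul, coeff_X_pow, if_neg (h b), mul_zero]

/-- graded piece -/
def GG (r : ZMod 7) (f : PowerSeries ℤ) : Prop := ∀ n : ℕ, (n : ZMod 7) ≠ r → coeff n f = 0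

lemma GG.mul {r s t : ZMod 7} {f g : PowerSeries ℤ} (hf : GG r f) (hg : GG s g) (ht : r + s = t) :
    GG t (f * g) := by
  intro n hn
  rw [coeff_mul]
  apply Finset.sum_eq_zero
  rintro ⟨i, j⟩ hij
  have hij' := Finset.HasAntidiagonal.mem_antidiagonal.mp hij
  by_cases hi : (i : ZMod 7) = r
  · have hj : (j : ZMod 7) ≠ s := by
      intro hj
      apply hn
      rw [← hij', ← ht, ← hi, ← hj]; simp
    rw [hg j hj, mul_zero]
  · rw [hf i hi, zero_mul]

lemma GG.add {r : ZMod 7} {f g : PowerSeries ℤ} (hf : GG r f) (hg : GG r g) : GG r (f + g) := by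
  intro n hn
  rw [map_add, hf n hn, hg n hn, add_zero]

lemma GG.cmul {r : ZMod 7} {f : PowerSeries ℤ} (c : ℤ) (hf : GG r f) : GG r (C c * f) := by
  intro n hn
  rw [coeff_C_mul, hf n hn, mul_zero]

/-- component -/
def cp (r : ZMod 7) (f : PowerSeries ℤ) : PowerSeries ℤ :=
  PowerSeries.mk fun n => if (n : ZMod 7) = r then coeff n f else 0

lemma cp_GG (r : ZMod 7) (f : PowerSeries ℤ) : GG r (cp r f) := by
  intro n hn
  simp [cp, hn]

lemma expand49 (b : ℕ) (hb : 1 ≤ b) : PowerSeries.expand 49 (by norm_num) (J b) = J (49*b) := by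
  have := PowerSeries.expand_mul 7 (by norm_num) 7 (by norm_num) (J b)
  rw [expand_J b hb, expand_J (7*b) (by omega), ← mul_assoc] at this
  exact this

lemma pent_cast (k : ℤ) : 2 * ((pentagonal k : ℕ) : ZMod 7) = k * (3 * k - 1) := by
  have := two_mul_natCast_pentagonal k
  have := congrArg (Int.cast : ℤ → ZMod 7) this
  push_cast at this
  exact this

lemma E_split : J 1 = cp 0 (J 1) + cp 1 (J 1) + cp 2 (J 1) + cp 5 (J 1) := by
  ext n
  simp only [map_add, cp, coeff_mk]
  by_cases h : n ∈ Set.range pentagonal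
  · obtain ⟨k, rfl⟩ := h
    have h1 := pent_cast k
    generalize ((pentagonal k : ℕ) : ZMod 7) = x at *
    generalize ((k : ℤ) : ZMod 7) = z at *
    have : x = 0 ∨ x = 1 ∨ x = 2 ∨ x = 5 := by
      revert x z; decide
    rcases this with rfl | rfl | rfl | rfl <;> simp +decide
  · rw [J_pent, coeff_pentagonalSeries_eq_zero ℤ h]
    simp

lemma w_eq : cp 2 (J 1) = - X ^ 2 * J 49 := by
  have h49 : J 49 = PowerSeries.expand 49 (by norm_num) (J 1) := by
    rw [expand49 1 le_rfl]
  rw [h49]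
  ext n
  rw [neg_mul, map_neg, coeff_X_pow_mul']
  simp only [cp, coeff_mk]
  by_cases h : 2 ≤ n ∧ 49 ∣ n - 2
  · obtain ⟨h2, k, hk⟩ := h
    obtain rfl : n = 49 * k + 2 := by omega
    have e : ((49 * k + 2 : ℕ) : ZMod 7) = 2 := by
      push_cast
      rw [show (49 : ZMod 7) = 0 by decide]; simp
    rw [if_pos e, if_pos h2, hk, coeff_expand_mul, J_pent]
    by_cases hk : k ∈ Set.range pentagonal
    · obtain ⟨m, rfl⟩ := hk
      have h3 : 49 * pentagonal m + 2 = pentagonal (7 * m - 1) := by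
        have h4 := two_mul_natCast_pentagonal m
        have h5 := two_mul_natCast_pentagonal (7*m-1)
        zify
        nlinarith
      rw [h3, coeff_pentagonalSeries_pentagonal, coeff_pentagonalSeries_pentagonal]
      have : (7 * m - 1).negOnePow = - m.negOnePow := by
        rw [Int.negOnePow_sub]
        have : (7 * m) = m + 2 * (3 * m) := by ring
        rw [this, Int.negOnePow_add, Int.negOnePow_two_mul]
        simp
      rw [this]; simp
    · rw [coeff_pentagonalSeries_eq_zero ℤ hk, coeff_pentagonalSeries_eq_zero ℤ, neg_zero]
      rintro ⟨m, hm⟩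
      apply hk
      have h4 := two_mul_natCast_pentagonal m
      have h1 := pent_cast m
      rw [hm, e] at h1
      have h6 : (m : ZMod 7) = 6 := by
        generalize ((m : ℤ) : ZMod 7) = z at *
        revert z; decide
      have h7 : ((m + 1 : ℤ) : ZMod 7) = 0 := by
        push_cast; rw [h6]; decide
      rw [ZMod.intCast_zmod_eq_zero_iff_dvd] at h7
      obtain ⟨d, hd⟩ := h7
      refine ⟨d, ?_⟩
      have h5 := two_mul_natCast_pentagonal d
      obtain rfl : m = 7 * d - 1 := by push_cast at hd; omega
      rw [hm] at h4
      push_cast at h4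
      zify
      nlinarith
  · have hR : (if 2 ≤ n then coeff (n-2) (PowerSeries.expand 49 (by norm_num) (J 1)) else 0) = 0 := by
      split_ifs with h2
      · rw [coeff_expand_of_not_dvd]
        intro h3; exact h ⟨h2, h3⟩
      · rfl
    rw [hR, neg_zero]
    split_ifs with e
    · rw [J_pent, coeff_pentagonalSeries_eq_zero]
      rintro ⟨m, rfl⟩
      apply h
      have h4 := two_mul_natCast_pentagonal m
      have h1 := pent_cast m
      rw [e] at h1
      have h6 : (m : ZMod 7) = 6 := by
        generalize ((m : ℤ) : ZMod 7) = z at *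
        revert z; decide
      have h7 : ((m + 1 : ℤ) : ZMod 7) = 0 := by
        push_cast; rw [h6]; decide
      rw [ZMod.intCast_zmod_eq_zero_iff_dvd] at h7
      obtain ⟨d, hd⟩ := h7
      have h5 := two_mul_natCast_pentagonal d
      obtain rfl : m = 7 * d - 1 := by push_cast at hd; omega
      have h8 : pentagonal (7 * d - 1) = 49 * pentagonal d + 2 := by
        zify
        nlinarith
      omega
    · rfl

lemma tri_cast (m : ℕ) : 2 * (((m+1).choose 2 : ℕ) : ZMod 7) = (m+1) * m := by
  have := congrArg (Int.cast : ℤ → ZMod 7) (two_choose (m+1))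
  push_cast at this
  rw [this]; ring

lemma jac6 (n : ℕ) (hn : (n : ZMod 7) = 6) :
    coeff n (J 1 ^ 3) = coeff n (C (-7) * (X ^ 6 * J 49 ^ 3)) := by
  have h49 : J 49 ^ 3 = PowerSeries.expand 49 (by norm_num) (J 1 ^ 3) := by
    rw [map_pow, expand49 1 le_rfl]
  have htri : ∀ m : ℕ, n = (m+1).choose 2 → ∃ d, m = 7 * d + 3 ∧ n = 49 * (d+1).choose 2 + 6 := by
    intro m hm
    have h1 := tri_cast m
    rw [← hm, hn] at h1
    have h6 : (m : ZMod 7) = 3 := by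
        generalize ((m : ℕ) : ZMod 7) = z at *
        revert z; decide
    have h7 : ((m : ℕ) : ZMod 7) = (3 : ℕ) := by rw [h6]; rfl
    rw [ZMod.natCast_eq_natCast_iff'] at h7
    refine ⟨m / 7, by omega, ?_⟩
    obtain ⟨d, rfl⟩ : ∃ d, m = 7 * d + 3 := ⟨m/7, by omega⟩
    rw [show (7 * d + 3)/7 = d by omega, hm]
    have h4 := two_choose (d+1)
    have h5 := two_choose (7*d+3+1)
    zify
    push_cast at h4 h5
    nlinarith
  rw [h49, coeff_C_mul, coeff_X_pow_mul']
  by_cases h : 6 ≤ n ∧ 49 ∣ n - 6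
  · obtain ⟨h2, k, hk⟩ := h
    obtain rfl : n = 49 * k + 6 := by omega
    rw [if_pos h2, hk, coeff_expand_mul]
    by_cases hkt : ∃ d : ℕ, k = (d+1).choose 2
    · obtain ⟨d, rfl⟩ := hkt
      have h3 : 49 * (d+1).choose 2 + 6 = (7*d+3+1).choose 2 := by
        have h4 := two_choose (d+1)
        have h5 := two_choose (7*d+3+1)
        zify
        push_cast at h4 h5
        nlinarith
      rw [h3, jac_coeff_tri, jac_coeff_tri]
      have : (-1 : ℤ)^(7*d+3) = -(-1)^d := by
        rw [show 7*d+3 = 2*(3*d+1)+d+1 by ring, pow_succ, pow_add, pow_mul]; simp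
      rw [this]; push_cast; ring
    · rw [jac_coeff_not k (by push Not at hkt; exact hkt), mul_zero, jac_coeff_not]
      intro m hm
      obtain ⟨d, hd, hd2⟩ := htri m hm
      exact hkt ⟨d, by omega⟩
  · have hR : (if 6 ≤ n then coeff (n-6) (PowerSeries.expand 49 (by norm_num) (J 1 ^ 3)) else 0) = 0 := by
      split_ifs with h2
      · rw [coeff_expand_of_not_dvd]
        intro h3; exact h ⟨h2, h3⟩
      · rfl
    rw [hR, mul_zero, jac_coeff_not]
    intro m hm
    obtain ⟨d, hd, hd2⟩ := htri m hm
    apply h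
    omega

lemma jac4 (n : ℕ) (hn : (n : ZMod 7) = 4) : coeff n (J 1 ^ 3) = 0 := by
  apply jac_coeff_not
  intro m hm
  have h1 := tri_cast m
  rw [← hm, hn] at h1
  generalize ((m : ℕ) : ZMod 7) = z at *
  revert z; decide

lemma GG_X_pow (k : ℕ) : GG (k : ZMod 7) (X ^ k) := by
  intro n hn
  rw [coeff_X_pow, if_neg]
  rintro rfl; exact hn rfl

lemma GG_J49 : GG 0 (J 49) := by
  intro n hn
  rw [← expand49 1 le_rfl, coeff_expand_of_not_dvd]
  rintro ⟨k, rfl⟩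
  apply hn
  push_cast
  rw [show (49 : ZMod 7) = 0 by decide]; simp

lemma cube_rel (u v w y : PowerSeries ℤ) (hE : J 1 = u + v + w + y)
    (hu : GG 0 u) (hv : GG 1 v) (hw : GG 2 w) (hy : GG 5 y) (hw' : w = - X ^ 2 * J 49) :
    u * v * y = w ^ 3 ∧ u * w ^ 2 + v ^ 2 * w + v * y ^ 2 = 0 := by
  have g0 : GG 0 (u*u*u + C 3 * (v*v*y) + C 6 * (u*w*y)) :=
    (((hu.mul hu rfl).mul hu rfl).add (((hv.mul hv rfl).mul hy rfl).cmul 3)).add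
      (((hu.mul hw rfl).mul hy rfl).cmul 6)
  have g1 : GG 1 (C 3 * (u*u*v) + y*y*y + C 6 * (v*w*y)) :=
    ((((hu.mul hu rfl).mul hv rfl).cmul 3).add ((hy.mul hy rfl).mul hy rfl)).add
      (((hv.mul hw rfl).mul hy rfl).cmul 6)
  have g2 : GG 2 (C 3 * (u*u*w) + C 3 * (u*v*v) + C 3 * (w*w*y)) :=
    ((((hu.mul hu rfl).mul hw rfl).cmul 3).add (((hu.mul hv rfl).mul hv rfl).cmul 3)).add
      (((hw.mul hw rfl).mul hy rfl).cmul 3)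
  have g3 : GG 3 (v*v*v + C 6 * (u*v*w) + C 3 * (u*y*y)) :=
    (((hv.mul hv rfl).mul hv rfl).add (((hu.mul hv rfl).mul hw rfl).cmul 6)).add
      (((hu.mul hy rfl).mul hy rfl).cmul 3)
  have g4 : GG 4 (C 3 * (u*w*w) + C 3 * (v*v*w) + C 3 * (v*y*y)) :=
    ((((hu.mul hw rfl).mul hw rfl).cmul 3).add (((hv.mul hv rfl).mul hw rfl).cmul 3)).add
      (((hv.mul hy rfl).mul hy rfl).cmul 3)
  have g5 : GG 5 (C 3 * (u*u*y) + C 3 * (v*w*w) + C 3 * (w*y*y)) :=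
    ((((hu.mul hu rfl).mul hy rfl).cmul 3).add (((hv.mul hw rfl).mul hw rfl).cmul 3)).add
      (((hw.mul hy rfl).mul hy rfl).cmul 3)
  have g6 : GG 6 (w*w*w + C 6 * (u*v*y)) :=
    ((hw.mul hw rfl).mul hw rfl).add (((hu.mul hv rfl).mul hy rfl).cmul 6)
  have hsum : J 1 ^ 3 = (u*u*u + C 3 * (v*v*y) + C 6 * (u*w*y)) + (C 3 * (u*u*v) + y*y*y + C 6 * (v*w*y))
     + (C 3 * (u*u*w) + C 3 * (u*v*v) + C 3 * (w*w*y)) + (v*v*v + C 6 * (u*v*w) + C 3 * (u*y*y))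
     + (C 3 * (u*w*w) + C 3 * (v*v*w) + C 3 * (v*y*y)) + (C 3 * (u*u*y) + C 3 * (v*w*w) + C 3 * (w*y*y))
     + (w*w*w + C 6 * (u*v*y)) := by
    rw [hE]
    have c3 : (C 3 : PowerSeries ℤ) = 3 := rfl
    have c6 : (C 6 : PowerSeries ℤ) = 6 := rfl
    rw [c3, c6]
    ring
  constructor
  · have h6 : w*w*w + C 6 * (u*v*y) = C (-7) * (X ^ 6 * J 49 ^ 3) := by
      ext n
      by_cases hn : (n : ZMod 7) = 6
      · rw [← jac6 n hn, hsum]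
        rw [map_add _ _ (w*w*w + C 6 * (u*v*y))]
        simp only [map_add _ (_ + _ + _) (_ + _ + _)]
        rw [g0 n (by rw [hn]; decide), g1 n (by rw [hn]; decide), g2 n (by rw [hn]; decide),
          g3 n (by rw [hn]; decide), g4 n (by rw [hn]; decide), g5 n (by rw [hn]; decide)]
        simp
      · rw [g6 n hn]
        have : GG 6 (C (-7) * (X ^ 6 * J 49 ^ 3)) := by
          have : J 49 ^ 3 = J 49 * J 49 * J 49 := by ring
          rw [this]
          exact ((GG_X_pow 6).mul ((GG_J49.mul GG_J49 rfl).mul GG_J49 rfl) rfl).cmul _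
        rw [this n hn]
    have c6 : (C 6 : PowerSeries ℤ) = 6 := rfl
    have c7 : (C (-7) : PowerSeries ℤ) = -7 := by rw [map_neg]; rfl
    rw [c6, c7] at h6
    have h66 : (6 : PowerSeries ℤ) ≠ 0 := by
      rw [← c6]; intro h; have := congrArg (constantCoeff (R := ℤ)) h
      rw [constantCoeff_C, map_zero] at this; norm_num at this
    apply mul_left_cancel₀ h66
    have h8 : X ^ 6 * J 49 ^ 3 = - w ^ 3 := by rw [hw']; ring
    rw [h8] at h6
    linear_combination h6
  · have h4 : C 3 * (u*w*w) + C 3 * (v*v*w) + C 3 * (v*y*y) = 0 := by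
      ext n
      by_cases hn : (n : ZMod 7) = 4
      · have := jac4 n hn
        rw [hsum, map_add _ _ (w*w*w + C 6 * (u*v*y))] at this
        simp only [map_add _ (_ + _ + _) (_ + _ + _)] at this
        rw [g0 n (by rw [hn]; decide), g1 n (by rw [hn]; decide), g2 n (by rw [hn]; decide),
          g3 n (by rw [hn]; decide), g5 n (by rw [hn]; decide), g6 n (by rw [hn]; decide)] at this
        simpa using this
      · rw [g4 n hn]; simp
    have c3 : (C 3 : PowerSeries ℤ) = 3 := rfl
    rw [c3] at h4
    have h33 : (3 : PowerSeries ℤ) ≠ 0 := by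
      rw [← c3]; intro h; have := congrArg (constantCoeff (R := ℤ)) h
      rw [constantCoeff_C, map_zero] at this; norm_num at this
    apply mul_left_cancel₀ h33
    linear_combination h4

/-- P part -/
def PPol {R : Type*} [CommRing R] (A B C D : R) : R :=
  (A*A*A + 3*A*B*D + B*B*B + C*C*C + D*D*D) - (A*B*C + A*C*D + A*A*D + A*B*B + B*D*D + A*C*C + B*C*D + B*C*C + C*C*D)

/-- Q part -/
def QPol {R : Type*} [CommRing R] (A B C D : R) : R :=
  (A*A*C + A*B*D + A*B*C + A*A*B + B*B*D + A*C*D + B*B*C + B*C*D + C*D*D + A*D*D) - (A*B*C + A*C*D + A*A*D + A*B*B + B*D*D + A*C*C + B*C*D + B*C*C + C*C*D)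

lemma triple {R : Type*} [CommRing R] (A B C D ω : R) (h7 : ω^7 = 1)
    (hP : 1 + ω + ω^2 + ω^3 + ω^4 + ω^5 + ω^6 = 0) :
    (A + ω*B + ω^2*C + ω^5*D) * (A + ω^2*B + ω^4*C + ω^10*D) * (A + ω^4*B + ω^8*C + ω^20*D)
    = PPol A B C D + QPol A B C D * (ω + ω^2 + ω^4) := by
  have h8 : ω^8 = ω := by linear_combination ω * h7
  have h10 : ω^10 = ω^3 := by linear_combination ω^3 * h7
  have h20 : ω^20 = ω^6 := by linear_combination (ω^13 + ω^6) * h7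
  rw [h8, h10, h20, PPol, QPol]
  linear_combination (ω^1*(A*B*D) + ω^1*(A*B*C) + ω^3*(A*C*D) + 3*ω^0*(A*B*D) + ω^2*(A*D*D) + ω^0*(B*B*B) + ω^2*(B*B*D) + ω^2*(B*B*C) + ω^4*(B*C*D) + ω^1*(B*B*D) + ω^3*(B*D*D) + ω^1*(A*C*D) + ω^1*(B*B*C) + ω^3*(B*C*D) + ω^3*(B*C*C) + ω^0*(C*C*C) + ω^5*(C*C*D) + ω^2*(B*C*D) + ω^4*(C*D*D) + ω^2*(A*B*D) + ω^4*(A*D*D) + ω^4*(B*B*D) + ω^1*(B*C*D) + ω^6*(B*D*D) + ω^2*(A*C*D) + ω^6*(B*C*D) + ω^3*(C*C*D) + ω^8*(C*D*D) + ω^1*(C*D*D) + ω^1*(A*D*D) + ω^5*(B*D*D) + ω^2*(C*D*D) + ω^7*(D*D*D) + ω^0*(D*D*D)) * h7 + (A*B*C + A*C*D + A*A*D + A*B*B + B*D*D + A*C*C + B*C*D + B*C*C + C*C*D) * hP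

lemma sextuple {R : Type*} [CommRing R] (A B C D ω : R) (h7 : ω^7 = 1)
    (hP : 1 + ω + ω^2 + ω^3 + ω^4 + ω^5 + ω^6 = 0) :
    ((A + ω*B + ω^2*C + ω^5*D) * (A + ω^2*B + ω^4*C + ω^10*D) * (A + ω^4*B + ω^8*C + ω^20*D)) *
    ((A + ω^3*B + ω^6*C + ω^15*D) * (A + ω^6*B + ω^12*C + ω^30*D) * (A + ω^12*B + ω^24*C + ω^60*D))
    = PPol A B C D ^ 2 - PPol A B C D * QPol A B C D + 2 * QPol A B C D ^ 2 := by
  have h1 := triple A B C D ω h7 hP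
  have h2 := triple A B C D (ω^3) (by rw [← pow_mul, mul_comm, pow_mul, h7, one_pow])
    (by linear_combination hP + (ω^2 + ω^5 + ω + ω^8 + ω^4 + ω^11) * h7)
  simp only [← pow_mul] at h2
  norm_num only at h2
  rw [h1, h2]
  generalize PPol A B C D = P
  generalize QPol A B C D = Q
  have h9 : ω^12 = ω^5 := by linear_combination ω^5 * h7
  rw [h9]
  linear_combination (P * Q + Q^2) * hP + Q^2 * (3 + ω + ω^2 + ω^3) * h7

/-- norm -/
def Nm (ζ : ℂ) (f : PowerSeries ℂ) : PowerSeries ℂ :=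
  f * ((rescale (ζ^1) f * rescale (ζ^2) f * rescale (ζ^4) f) *
    (rescale (ζ^3) f * rescale (ζ^6) f * rescale (ζ^12) f))

lemma Nm_mul (ζ : ℂ) (f g : PowerSeries ℂ) : Nm ζ (f * g) = Nm ζ f * Nm ζ g := by
  simp only [Nm, map_mul]; ring

lemma zsum (ζ : ℂ) (hζ : IsPrimitiveRoot ζ 7) (d : ℕ) (hd : ¬ 7 ∣ d) :
    1 + (ζ^d) + (ζ^d)^2 + (ζ^d)^3 + (ζ^d)^4 + (ζ^d)^5 + (ζ^d)^6 = 0 := by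
  have hc : Nat.Coprime d 7 := ((Nat.Prime.coprime_iff_not_dvd (by norm_num)).mpr hd).symm
  have h := (hζ.pow_of_coprime d hc).geom_sum_eq_zero (by norm_num)
  simp only [Finset.sum_range_succ, Finset.sum_range_zero, pow_zero, pow_one, zero_add] at h
  exact h

lemma Nm_X1 (ζ : ℂ) (hζ : IsPrimitiveRoot ζ 7) (d : ℕ) (hd : ¬ 7 ∣ d) :
    Nm ζ (1 - X ^ d) = 1 - X ^ (7*d) := by
  have hs := congrArg (C : ℂ →+* PowerSeries ℂ) (zsum ζ hζ d hd)
  have h7 : (C (ζ^d) : PowerSeries ℂ)^7 = 1 := by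
    rw [← map_pow, ← pow_mul, mul_comm, pow_mul, hζ.pow_eq_one, one_pow, map_one]
  simp only [map_add, map_one, map_zero] at hs
  simp only [map_pow (C : ℂ →+* PowerSeries ℂ) (ζ^d)] at hs
  have hr : ∀ i : ℕ, rescale (ζ^i) (1 - X ^ d : PowerSeries ℂ) = 1 - (C (ζ^d))^i * X^d := by
    intro i
    rw [map_sub, map_one, map_pow, rescale_X, mul_pow, ← map_pow, ← map_pow, ← pow_mul, ← pow_mul,
      mul_comm i d]
  have := sextuple (1 : PowerSeries ℂ) (-X^d) 0 0 (C (ζ^d)) h7 hs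
  rw [Nm]
  simp only [hr]
  simp only [PPol, QPol] at this
  rw [show (7*d) = d * 7 by ring, pow_mul]
  linear_combination (1 - X^d) * this

lemma Nm_X2 (ζ : ℂ) (hζ : IsPrimitiveRoot ζ 7) (d : ℕ) :
    Nm ζ (1 - X ^ (7*d)) = (1 - X ^ (7*d))^7 := by
  have hr : ∀ i : ℕ, rescale (ζ^i) (1 - X ^ (7*d) : PowerSeries ℂ) = 1 - X^(7*d) := by
    intro i
    rw [map_sub, map_one, map_pow, rescale_X, mul_pow, ← map_pow, ← pow_mul,
      show i * (7*d) = 7 * (i*d) by ring, pow_mul, hζ.pow_eq_one]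
    simp
  rw [Nm]
  simp only [hr]
  ring

lemma Nm_PP (ζ : ℂ) (hζ : IsPrimitiveRoot ζ 7) (M : ℕ) :
    Nm ζ (PP ℂ 1 (7*M)) * PP ℂ 49 M = PP ℂ 7 (7*M) * PP ℂ 7 M ^ 7 := by
  induction M with
  | zero => simp [PP, Nm]
  | succ M ih =>
    rw [show 7*(M+1) = 7*M+1+1+1+1+1+1+1 by ring]
    simp only [PP_succ, Nm_mul, one_mul]
    rw [Nm_X1 ζ hζ (7*M+1) (by omega), Nm_X1 ζ hζ (7*M+1+1) (by omega),
      Nm_X1 ζ hζ (7*M+1+1+1) (by omega), Nm_X1 ζ hζ (7*M+1+1+1+1) (by omega),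
      Nm_X1 ζ hζ (7*M+1+1+1+1+1) (by omega), Nm_X1 ζ hζ (7*M+1+1+1+1+1+1) (by omega),
      show 7*M+1+1+1+1+1+1+1 = 7 * (M+1) by ring, Nm_X2 ζ hζ (M+1),
      show 7 * (7 * (M+1)) = 49 * (M+1) by ring]
    generalize (1 - X ^ (7 * (7*M+1)) : PowerSeries ℂ) = a1
    generalize (1 - X ^ (7 * (7*M+1+1)) : PowerSeries ℂ) = a2
    generalize (1 - X ^ (7 * (7*M+1+1+1)) : PowerSeries ℂ) = a3
    generalize (1 - X ^ (7 * (7*M+1+1+1+1)) : PowerSeries ℂ) = a4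
    generalize (1 - X ^ (7 * (7*M+1+1+1+1+1)) : PowerSeries ℂ) = a5
    generalize (1 - X ^ (7 * (7*M+1+1+1+1+1+1)) : PowerSeries ℂ) = a6
    generalize (1 - X ^ (7 * (M+1)) : PowerSeries ℂ) = b
    generalize (1 - X ^ (49 * (M+1)) : PowerSeries ℂ) = c
    linear_combination (a1*a2*a3*a4*a5*a6*b^7*c) * ih

/-- complexification -/
abbrev mC : PowerSeries ℤ →+* PowerSeries ℂ := PowerSeries.map (Int.castRingHom ℂ)

lemma mC_PP (b n : ℕ) : mC (PP ℤ b n) = PP ℂ b n := by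
  simp [PP, map_prod]

lemma mC_inj : Function.Injective mC := by
  apply PowerSeries.map_injective
  exact Int.cast_injective

lemma J_dvdC (b : ℕ) (hb : 1 ≤ b) (M n : ℕ) (h : M ≤ n) :
    (X : PowerSeries ℂ) ^ (M+1) ∣ mC (J b) - PP ℂ b n := by
  have := map_dvd mC (J_dvd b hb M n h)
  rw [map_sub, mC_PP, map_pow, PowerSeries.map_X] at this
  exact this

lemma rescale_dvd (a : ℂ) (f : PowerSeries ℂ) (k : ℕ) (h : X ^ k ∣ f) : X ^ k ∣ rescale a f := by
  have := map_dvd (rescale a) h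
  rw [map_pow, rescale_X, mul_pow] at this
  exact (Dvd.intro_left _ rfl).trans this

lemma Nm_J (ζ : ℂ) (hζ : IsPrimitiveRoot ζ 7) :
    Nm ζ (mC (J 1)) * mC (J 49) = mC (J 7) ^ 8 := by
  apply eq_of_dvd
  intro M
  let I : Ideal (PowerSeries ℂ) := Ideal.span {X^(M+1)}
  let π := Ideal.Quotient.mk I
  have hπ : ∀ f g : PowerSeries ℂ, (X : PowerSeries ℂ)^(M+1) ∣ f - g ↔ π f = π g := by
    intro f g
    rw [Ideal.Quotient.eq, Ideal.mem_span_singleton]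
  have hJ : ∀ b n, 1 ≤ b → M ≤ n → π (mC (J b)) = π (PP ℂ b n) :=
    fun b n hb hn => (hπ _ _).mp (J_dvdC b hb M n hn)
  have hr : ∀ a : ℂ, π (rescale a (mC (J 1))) = π (rescale a (PP ℂ 1 (7*M))) := by
    intro a
    rw [← hπ, ← map_sub]
    exact rescale_dvd _ _ _ (J_dvdC 1 le_rfl M (7*M) (by omega))
  rw [hπ]
  have h1 : π (Nm ζ (mC (J 1))) = π (Nm ζ (PP ℂ 1 (7*M))) := by
    simp only [Nm, map_mul, hr]
    rw [hJ 1 (7*M) le_rfl (by omega)]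
  rw [map_mul, h1, hJ 49 M (by omega) le_rfl, ← map_mul, Nm_PP ζ hζ, map_mul, map_pow, map_pow,
    ← hJ 7 (7*M) (by omega) (by omega), ← hJ 7 M (by omega) (by omega)]
  ring

lemma rescale_GG (ζ : ℂ) (hζ : IsPrimitiveRoot ζ 7) (r : ℕ) (f : PowerSeries ℤ)
    (hf : GG (r : ZMod 7) f) (i : ℕ) :
    rescale (ζ^i) (mC f) = C ζ ^ (i * r) * mC f := by
  ext n
  rw [coeff_rescale, ← map_pow, coeff_C_mul]
  by_cases hn : (n : ZMod 7) = r
  · congr 1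
    rw [← pow_mul]
    rw [ZMod.natCast_eq_natCast_iff] at hn
    have h2 : i * n ≡ i * r [MOD 7] := hn.mul_left i
    rw [pow_eq_pow_mod (i * n) hζ.pow_eq_one, pow_eq_pow_mod (i * r) hζ.pow_eq_one, h2]
  · rw [coeff_map, hf n hn]; simp

lemma norm_rel (u v w y : PowerSeries ℤ) (hE : J 1 = u + v + w + y)
    (hu : GG 0 u) (hv : GG 1 v) (hw : GG 2 w) (hy : GG 5 y) :
    (u + v + w + y) * (PPol u v w y ^ 2 - PPol u v w y * QPol u v w y + 2 * QPol u v w y ^ 2) * J 49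
      = J 7 ^ 8 := by
  apply mC_inj
  have hζ : IsPrimitiveRoot (Complex.exp (2 * Real.pi * Complex.I / (7:ℕ))) 7 :=
    Complex.isPrimitiveRoot_exp 7 (by norm_num)
  generalize Complex.exp (2 * Real.pi * Complex.I / (7:ℕ)) = ζ at hζ
  have h := Nm_J ζ hζ
  have hs := congrArg (C : ℂ →+* PowerSeries ℂ) (zsum ζ hζ 1 (by norm_num))
  have h7 : (C ζ : PowerSeries ℂ)^7 = 1 := by
    rw [← map_pow, hζ.pow_eq_one, map_one]
  simp only [pow_one, map_add, map_one, map_zero] at hs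
  simp only [map_pow (C : ℂ →+* PowerSeries ℂ) ζ] at hs
  have hx := sextuple (mC u) (mC v) (mC w) (mC y) (C ζ) h7 hs
  rw [map_mul mC _ (J 49), map_pow mC (J 7), ← h]
  refine congrArg (fun z => z * mC (J 49)) ?_
  rw [map_mul]
  have hP : mC (PPol u v w y ^ 2 - PPol u v w y * QPol u v w y + 2 * QPol u v w y ^ 2)
    = PPol (mC u) (mC v) (mC w) (mC y) ^ 2 - PPol (mC u) (mC v) (mC w) (mC y) *
     QPol (mC u) (mC v) (mC w) (mC y) + 2 * QPol (mC u) (mC v) (mC w) (mC y) ^ 2 := by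
    simp only [PPol, QPol, map_add, map_sub, map_mul, map_pow, map_ofNat]
  rw [hP, ← hx, ← hE, Nm]
  refine congrArg (fun z => mC (J 1) * z) ?_
  have hr : ∀ i : ℕ, rescale (ζ^i) (mC (J 1)) = mC u + C ζ ^ (i * 1) * mC v + C ζ ^ (i * 2) * mC w
      + C ζ ^ (i * 5) * mC y := by
    intro i
    rw [hE, map_add, map_add, map_add, map_add, map_add, map_add, rescale_GG ζ hζ 1 v (by simpa using hv),
     rescale_GG ζ hζ 2 w (by simpa using hw), rescale_GG ζ hζ 5 y (by simpa using hy),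
     rescale_GG ζ hζ 0 u (by simpa using hu)]
    simp
  simp only [hr]
  norm_num only
  simp only [pow_one]

lemma final_poly {K : Type*} [Field K] (x s : K)
    (h : x^7+7*x^6+21*x^5+49*x^4+(147+7*s)*x^3+(343+35*s)*x^2+(343+49*s)*x-s^2 = 0)
    (g : K) (hg : g = x^4) :
    s^8 = (1*49^0)*s^0*g^7 + (1*49^1)*s^0*g^6 + (28*49^0)*s^1*g^6 + (1*49^2)*s^0*g^5 + (28*49^1)*s^1*g^5 + (322*49^0)*s^2*g^5 + (1*49^3)*s^0*g^4 + (28*49^2)*s^1*g^4 + (322*49^1)*s^2*g^4 + (1904*49^0)*s^3*g^4 + (1*49^4)*s^0*g^3 + (28*49^3)*s^1*g^3 + (322*49^2)*s^2*g^3 + (1904*49^1)*s^3*g^3 + (5915*49^0)*s^4*g^3 + (1*49^5)*s^0*g^2 + (28*49^4)*s^1*g^2 + (322*49^3)*s^2*g^2 + (1904*49^2)*s^3*g^2 + (5915*49^1)*s^4*g^2 + (8624*49^0)*s^5*g^2 + (1*49^6)*s^0*g^1 + (28*49^5)*s^1*g^1 + (322*49^4)*s^2*g^1 + (1904*49^3)*s^3*g^1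 + (5915*49^2)*s^4*g^1 + (8624*49^1)*s^5*g^1 + (4018*49^0)*s^6*g^1 := by
  obtain ⟨y, hy⟩ : ∃ y, y = x^2 := ⟨_, rfl⟩
  have hM2 : y*(y^3+21*y^2+(147+7*s)*y+(343+49*s))^2 - (7*y^3+49*y^2+(343+35*s)*y-s^2)^2 = 0 := by
    rw [hy]
    linear_combination (x*((x^2)^3+21*(x^2)^2+(147+7*s)*x^2+(343+49*s)) - (7*(x^2)^3+49*(x^2)^2+(343+35*s)*x^2-s^2)) * h
  have hg2 : g = y^2 := by rw [hg, hy]; ring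
  rw [hg2]
  linear_combination - (y*(((117649)*s^0 + (33614)*s^1 + (3087)*s^2 + (70)*s^3)*y^0 + ((2401)*s^0 + (686)*s^1 + (63)*s^2)*y^2 + ((49)*s^0 + (14)*s^1)*y^4 + ((1)*s^0)*y^6) - (((-1)*s^4)*y^0 + ((-16807)*s^0 + (-4802)*s^1 + (-441)*s^2)*y^2 + ((-343)*s^0 + (-98)*s^1)*y^4 + ((-7)*s^0)*y^6)) * hM2

lemma param {K : Type*} [Field K] (a b c : K) (h1 : a*b*c = 1) (h2 : a = b^2 + b*c^2) :
    ∃ z, z = c^3*a ∧ a = b^2*(1+z) ∧ c = b^4*z*(1+z) ∧ b^7*z*(1+z)^2 = 1 := by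
  refine ⟨c^3*a, rfl, ?_, ?_, ?_⟩
  · linear_combination h2 - b*c^2*h1
  · have h3 : a = b^2*(1+c^3*a) := by linear_combination h2 - b*c^2*h1
    have : b^4*(c^3*a)*(1+c^3*a) = b^2*(c^3*a)*a := by
      linear_combination - b^2*(c^3*a)*h3
    rw [this]
    linear_combination -(c + c*(a*b*c)) * h1
  · have h3 : a = b^2*(1+c^3*a) := by linear_combination h2 - b*c^2*h1
    have : b^7*(c^3*a)*(1+c^3*a)^2 = b^3*(c^3*a)*a^2 := by
      linear_combination - b^3*(c^3*a)*(a + b^2*(1+c^3*a))*h3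
    rw [this]
    linear_combination ((a*b*c)^2 + a*b*c + 1) * h1

lemma normM {K : Type*} [Field K] (b z : K) (h : b^7*z*(1+z)^2 = 1) (a c s : K)
    (ha : a = b^2*(1+z)) (hc : c = b^4*z*(1+z)) (hs : s = a^3*b - z + b^3*c - 8) :
    (-a+b+1+-c) * (PPol (-a) b 1 (-c) ^2 - PPol (-a) b 1 (-c) * QPol (-a) b 1 (-c) + 2 * QPol (-a) b 1 (-c) ^2) = - s^2 := by
  rw [hs, hc, ha]
  simp only [PPol, QPol]
  linear_combination (b^0*((-65) + (-16)*z^1 + (-1)*z^2)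
      + b^7*((-13) + (-76)*z^1 + (-144)*z^2 + (-95)*z^3 + (-16)*z^4 + (-1)*z^5)
      + b^14*((7)*z^3 + (35)*z^4 + (62)*z^5 + (46)*z^6 + (11)*z^7 + (-1)*z^8)
      + b^21*((-1)*z^6 + (-5)*z^7 + (-10)*z^8 + (-10)*z^9 + (-5)*z^10 + (-1)*z^11)) * h

lemma minM {K : Type*} [Field K] (b z : K) (h : b^7*z*(1+z)^2 = 1) (a c s x : K)
    (ha : a = b^2*(1+z)) (hc : c = b^4*z*(1+z)) (hs : s = a^3*b - z + b^3*c - 8)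
    (hx : x = a - b - 1 + c) :
    x^7+7*x^6+21*x^5+49*x^4+(147+7*s)*x^3+(343+35*s)*x^2+(343+49*s)*x-s^2 = 0 := by
  rw [hx, hs, hc, ha]
  linear_combination (b^0*((9) + (-5)*z^1 + (1)*z^2)
      + b^1*((-28))
      + b^2*((70) + (42)*z^1)
      + b^3*((-84) + (-119)*z^1 + (-28)*z^2)
      + b^4*((28) + (147)*z^1 + (119)*z^2 + (14)*z^3)
      + b^5*((56) + (-49)*z^1 + (-154)*z^2 + (-49)*z^3)
      + b^6*((-84) + (-77)*z^1 + (154)*z^2 + (182)*z^3 + (35)*z^4)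
      + b^7*((62) + (251)*z^1 + (207)*z^2 + (-31)*z^3 + (-47)*z^4 + (1)*z^5)
      + b^8*((-21) + (-259)*z^1 + (-413)*z^2 + (-91)*z^3 + (119)*z^4 + (35)*z^5)
      + b^9*((7) + (224)*z^1 + (651)*z^2 + (623)*z^3 + (168)*z^4 + (-21)*z^5)
      + b^10*((-84)*z^1 + (-455)*z^2 + (-721)*z^3 + (-392)*z^4 + (-21)*z^5 + (21)*z^6)
      + b^11*((21)*z^1 + (315)*z^2 + (840)*z^3 + (833)*z^4 + (301)*z^5 + (14)*z^6)
      + b^12*((-133)*z^2 + (-560)*z^3 + (-847)*z^4 + (-539)*z^5 + (-112)*z^6 + (7)*z^7)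
      + b^13*((35)*z^2 + (280)*z^3 + (665)*z^4 + (665)*z^5 + (280)*z^6 + (35)*z^7)
      + b^14*((-105)*z^3 + (-420)*z^4 + (-629)*z^5 + (-417)*z^6 + (-102)*z^7 + (1)*z^8)
      + b^15*((35)*z^3 + (196)*z^4 + (413)*z^5 + (413)*z^6 + (196)*z^7 + (35)*z^8)
      + b^16*((-42)*z^4 + (-168)*z^5 + (-252)*z^6 + (-168)*z^7 + (-42)*z^8)
      + b^17*((21)*z^4 + (105)*z^5 + (210)*z^6 + (210)*z^7 + (105)*z^8 + (21)*z^9)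
      + b^18*((-7)*z^5 + (-28)*z^6 + (-42)*z^7 + (-28)*z^8 + (-7)*z^9)
      + b^19*((7)*z^5 + (35)*z^6 + (70)*z^7 + (70)*z^8 + (35)*z^9 + (7)*z^10)
      + b^21*((1)*z^6 + (5)*z^7 + (10)*z^8 + (10)*z^9 + (5)*z^10 + (1)*z^11)) * h

lemma PPol_hom {K : Type*} [Field K] (W a b c : K) :
    PPol (-a*W) (b*W) W (-c*W) = W^3 * PPol (-a) b 1 (-c) := by
  simp only [PPol]; ring

lemma QPol_hom {K : Type*} [Field K] (W a b c : K) :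
    QPol (-a*W) (b*W) W (-c*W) = W^3 * QPol (-a) b 1 (-c) := by
  simp only [QPol]; ring

lemma field_main {K : Type*} [Field K] (U V W Y E q E7 E49 t T : K) (hW : W ≠ 0) (hE7 : E7 ≠ 0)
    (hE0 : E ≠ 0) (hq : q ≠ 0)
    (hE : E = U + V + W + Y) (hw : W = -q^2 * E49)
    (h1 : U*V*Y = W^3) (h2 : U*W^2 + V^2*W + V*Y^2 = 0)
    (hS : q * E7^4 = -(U^3*V) - Y^3*U - V^3*Y - 8*W^4)
    (ht : t * E^4 = q * E7^4) (hT : T * E7^4 = q^7 * E49^4) :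
    t ^ 7 = ∑ l ∈ Finset.range 7, aPoly l T * t ^ l := by
  obtain ⟨a, ha⟩ : ∃ a, a = -U/W := ⟨_, rfl⟩
  obtain ⟨b, hb⟩ : ∃ b, b = V/W := ⟨_, rfl⟩
  obtain ⟨c, hc⟩ : ∃ c, c = -Y/W := ⟨_, rfl⟩
  have hU : U = -a*W := by rw [ha]; field_simp
  have hV : V = b*W := by rw [hb]; field_simp
  have hY : Y = -c*W := by rw [hc]; field_simp
  clear ha hb hc
  subst hU hV hY
  have r1 : a*b*c = 1 := by
    have : W^3 * (a*b*c - 1) = 0 := by linear_combination h1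
    rcases mul_eq_zero.mp this with h | h
    · exact absurd h (pow_ne_zero _ hW)
    · linear_combination h
  have r2 : a = b^2 + b*c^2 := by
    have : W^3 * (a - (b^2 + b*c^2)) = 0 := by linear_combination -h2
    rcases mul_eq_zero.mp this with h | h
    · exact absurd h (pow_ne_zero _ hW)
    · linear_combination h
  obtain ⟨z, hz, ha, hc, hh⟩ := param a b c r1 r2
  obtain ⟨s, hs⟩ : ∃ s, s = a^3*b - z + b^3*c - 8 := ⟨_, rfl⟩
  obtain ⟨x, hx⟩ : ∃ x, x = a - b - 1 + c := ⟨_, rfl⟩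
  have hm := minM b z hh a c s x ha hc hs hx
  have hf := final_poly x s hm (x^4) rfl
  have hEx : E = -x*W := by rw [hE, hx]; ring
  have hsW : q * E7^4 = s * W^4 := by rw [hS, hs, hz]; ring
  have hs0 : s ≠ 0 := by
    rintro rfl
    rw [zero_mul] at hsW
    exact mul_ne_zero hq (pow_ne_zero 4 hE7) hsW
  have hx0 : x ≠ 0 := by
    rintro rfl
    apply hE0
    rw [hEx]; ring
  have htv : t = s / x^4 := by
    rw [eq_div_iff (pow_ne_zero _ hx0)]
    apply mul_right_cancel₀ (pow_ne_zero 4 hW)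
    rw [← hsW, ← ht, hEx]; ring
  have hTv : T = 1 / s := by
    rw [eq_div_iff hs0]
    apply mul_right_cancel₀ (pow_ne_zero 4 hW)
    have : q * (T * E7^4) = W^4 := by rw [hT, hw]; ring
    linear_combination (-T) * hsW + this
  clear hm
  generalize x^4 = g at *
  have hg0 : g ≠ 0 := by
    rintro rfl
    norm_num at hf
    exact hs0 hf
  simp only [Finset.sum_range_succ, Finset.sum_range_zero, aPoly]
  rw [htv, hTv]
  field_simp
  linear_combination hf

lemma square_rel (u v w y : PowerSeries ℤ) (hE : J 1 = u + v + w + y) 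
    (hu : GG 0 u) (hv : GG 1 v) (hw : GG 2 w) (hy : GG 5 y) (hw' : w = - X ^ 2 * J 49) :
    (X * J 7 ^ 4)^2 = (-(u^3*v) - y^3*u - v^3*y - 8*w^4)^2 := by
  have hN := norm_rel u v w y hE hu hv hw hy
  obtain ⟨h1, h2⟩ := cube_rel u v w y hE hu hv hw hy hw'
  have hw0 : w ≠ 0 := by
    rw [hw']
    exact mul_ne_zero (neg_ne_zero.mpr (pow_ne_zero _ X_ne_zero)) (J_ne 49 (by norm_num))
  have key : (u+v+w+y) * (PPol u v w y ^2 - PPol u v w y * QPol u v w y + 2 * QPol u v w y ^2) * w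
      = - (-(u^3*v) - y^3*u - v^3*y - 8*w^4)^2 := by
    let φ := algebraMap (PowerSeries ℤ) (FractionRing (PowerSeries ℤ))
    have hφ : Function.Injective φ := IsFractionRing.injective _ _
    have hW : φ w ≠ 0 := by
      intro h; exact hw0 (hφ (by rw [h, map_zero]))
    apply hφ
    have h1' := congrArg φ h1
    have h2' := congrArg φ h2
    simp only [PPol, QPol, map_mul, map_add, map_sub, map_neg, map_pow, map_ofNat, map_zero] at h1' h2' ⊢
    generalize φ u = U at *
    generalize φ v = V at *
    generalize φ w = W at *
    generalize φ y = Y at *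
    suffices (U+V+W+Y) * (PPol U V W Y ^2 - PPol U V W Y * QPol U V W Y + 2 * QPol U V W Y ^2) * W
      = - (-(U^3*V) - Y^3*U - V^3*Y - 8*W^4)^2 by simpa only [PPol, QPol] using this
    obtain ⟨a, ha⟩ : ∃ a, a = -U/W := ⟨_, rfl⟩
    obtain ⟨b, hb⟩ : ∃ b, b = V/W := ⟨_, rfl⟩
    obtain ⟨c, hc⟩ : ∃ c, c = -Y/W := ⟨_, rfl⟩
    have hU : U = -a*W := by rw [ha]; field_simp
    have hV : V = b*W := by rw [hb]; field_simp
    have hY : Y = -c*W := by rw [hc]; field_simp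
    clear ha hb hc
    subst hU hV hY
    have r1 : a*b*c = 1 := by
      have : W^3 * (a*b*c - 1) = 0 := by linear_combination h1'
      rcases mul_eq_zero.mp this with h | h
      · exact absurd h (pow_ne_zero _ hW)
      · linear_combination h
    have r2 : a = b^2 + b*c^2 := by
      have : W^3 * (a - (b^2 + b*c^2)) = 0 := by linear_combination -h2'
      rcases mul_eq_zero.mp this with h | h
      · exact absurd h (pow_ne_zero _ hW)
      · linear_combination h
    obtain ⟨z, hz, ha, hc, hh⟩ := param a b c r1 r2
    have hn := normM b z hh a c _ ha hc rfl
    rw [PPol_hom, QPol_hom]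
    rw [hz] at hn
    linear_combination W^8 * hn
  have : (X * J 7 ^ 4)^2 = X^2 * J 7 ^ 8 := by ring
  rw [this, ← hN]
  linear_combination -key + ((u+v+w+y) * (PPol u v w y ^2 - PPol u v w y * QPol u v w y + 2 * QPol u v w y ^2)) * hw'

lemma J_const (b : ℕ) (hb : 1 ≤ b) : constantCoeff (J b) = 1 := by
  rw [← coeff_zero_eq_constantCoeff_apply]
  simp [J]
  omega

lemma J1_coeff1 : coeff 1 (J 1) = -1 := by
  rw [J, coeff_mk]
  have : (∏ k ∈ Finset.range (1 + 1), (1 - (X : PowerSeries ℤ) ^ (1 * (k + 1)))) = 1 - X - X^2 + X^3 := by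
    rw [Finset.prod_range_succ, Finset.prod_range_one]; ring
  rw [this]
  simp [coeff_X_pow, coeff_one]

lemma root_rel (w : PowerSeries ℤ) (hww : w = cp 2 (J 1)) :
    X * J 7 ^ 4 = -(cp 0 (J 1)^3*cp 1 (J 1)) - cp 5 (J 1)^3*cp 0 (J 1) - cp 1 (J 1)^3*cp 5 (J 1) - 8*w^4 := by
  subst hww
  have hsq := square_rel (cp 0 (J 1)) (cp 1 (J 1)) (cp 2 (J 1)) (cp 5 (J 1)) E_split
    (cp_GG _ _) (cp_GG _ _) (cp_GG _ _) (cp_GG _ _) w_eq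
  have hu0 : constantCoeff (cp 0 (J 1)) = 1 := by
    rw [← J_const 1 le_rfl, ← coeff_zero_eq_constantCoeff_apply, ← coeff_zero_eq_constantCoeff_apply]
    simp [cp]
  obtain ⟨v1, hv1⟩ : X ∣ cp 1 (J 1) := by
    rw [X_dvd_iff, ← coeff_zero_eq_constantCoeff_apply]
    simp +decide [cp]
  have hv2 : constantCoeff v1 = -1 := by
    have h : coeff 1 (cp 1 (J 1)) = -1 := by
      simp [cp, J1_coeff1]
    rw [hv1] at h
    rw [← coeff_zero_eq_constantCoeff_apply, ← h]
    exact (coeff_succ_X_mul 0 v1).symm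
  obtain ⟨y1, hy1⟩ : X ∣ cp 5 (J 1) := by
    rw [X_dvd_iff, ← coeff_zero_eq_constantCoeff_apply]
    simp +decide [cp]
  rcases sq_eq_sq_iff_eq_or_eq_neg.mp hsq with h | h
  · exact h
  · exfalso
    rw [w_eq, hv1, hy1] at h
    have h2 : X * J 7 ^ 4 = X * (cp 0 (J 1)^3 * v1 + X * (X * y1^3 * cp 0 (J 1) + X^2 * v1^3*y1 + 8 * X^6 * J 49^4)) := by
      rw [h]; ring
    have h3 := congrArg constantCoeff (mul_left_cancel₀ X_ne_zero h2)
    simp [hu0, hv2, J_const] at h3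

/-- with `t = q·J_7^4/J_1^4`, one has
`t(q)^7 = ∑_{l=0}^{6} a_l(t(q^7))·t(q)^l` as formal power series. -/
theorem stmt4 (t : PowerSeries ℤ)
    (ht : t * (J 1) ^ 4 = PowerSeries.X * (J 7) ^ 4) :
    t ^ 7 = ∑ l ∈ Finset.range 7, aPoly l (expand7 t) * t ^ l := by
  have hT : expand7 t * J 7 ^ 4 = PowerSeries.X ^ 7 * J 49 ^ 4 := by
    have h := congrArg (PowerSeries.expand 7 (by norm_num)) ht
    rw [map_mul, map_mul, map_pow, map_pow, expand_J 1 le_rfl, expand_J 7 (by norm_num),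
      PowerSeries.expand_X, ← expand7_eq] at h
    exact h
  obtain ⟨h1, h2⟩ := cube_rel _ _ _ _ E_split
    (cp_GG _ _) (cp_GG _ _) (cp_GG _ _) (cp_GG _ _) w_eq
  have hS := root_rel _ rfl
  have hE := E_split
  have hw := w_eq
  generalize expand7 t = T at *
  generalize cp 0 (J 1) = u at *
  generalize cp 1 (J 1) = v at *
  generalize cp 2 (J 1) = w at *
  generalize cp 5 (J 1) = y at *
  have hw0 : w ≠ 0 := by
    rw [hw]
    exact mul_ne_zero (neg_ne_zero.mpr (pow_ne_zero _ PowerSeries.X_ne_zero))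
      (J_ne 49 (by norm_num))
  let φ := algebraMap (PowerSeries ℤ) (FractionRing (PowerSeries ℤ))
  have hφ : Function.Injective φ := IsFractionRing.injective _ _
  have hne : ∀ f, f ≠ 0 → φ f ≠ 0 := by
    intro f hf h; exact hf (hφ (by rw [h, map_zero]))
  have := field_main (φ u) (φ v) (φ w) (φ y) (φ (J 1)) (φ PowerSeries.X) (φ (J 7)) (φ (J 49))
    (φ t) (φ T) (hne _ hw0) (hne _ (J_ne 7 (by norm_num))) (hne _ (J_ne 1 le_rfl))
    (hne _ PowerSeries.X_ne_zero)
    (by simpa only [map_add] using congrArg φ hE)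
    (by simpa only [map_mul, map_neg, map_pow] using congrArg φ hw)
    (by simpa only [map_mul, map_pow] using congrArg φ h1)
    (by simpa only [map_mul, map_pow, map_add, map_zero] using congrArg φ h2)
    (by simpa only [map_mul, map_pow, map_sub, map_neg, map_ofNat] using congrArg φ hS)
    (by simpa only [map_mul, map_pow] using congrArg φ ht)
    (by simpa only [map_mul, map_pow] using congrArg φ hT)
  apply hφ
  simp only [Finset.sum_range_succ, Finset.sum_range_zero, aPoly] at this ⊢
  simpa only [map_mul, map_pow, map_add, map_zero, map_ofNat] using this
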